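/- arXiv:2309.13180 — 2 statements merged into one kernel-verified Lean document; each statement's English description precedes it below -/
import Mathlib

section
/- Let G be a finite simple graph with no isolated vertices, let Γ_fec be the set of fractional edge covers of G, and let Γ_bfec ⊆ Γ_fec be the set of basic fractional edge covers. Then a density ρ ∈ ℝ^E_{≥0} is admissible for Γ_fec if and only if it is admissible for Γ_bfec; that is, Adm(Γ_fec) = Adm(Γ_bfec). -/
open Finset

noncomputable section
open scoped Classical

variable {V : Type*}

/-- The set of admissible densities for a family `Γ` of objects on the edge set of `G`.
Densities are elements of `ℝ^E_{≥0}`, modeled as nonnegative functions on `Sym2 V`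
vanishing outside the edge set of `G`. `ρ` is admissible if `ℓ_ρ(γ) ≥ 1` for all `γ ∈ Γ`. -/
def Adm [Fintype V] [DecidableEq V] (G : SimpleGraph V) (Γ : Set (Sym2 V → ℝ)) :
    Set (Sym2 V → ℝ) :=
  {ρ | (∀ e, 0 ≤ ρ e) ∧ (∀ e ∉ G.edgeSet, ρ e = 0) ∧
    ∀ γ ∈ Γ, 1 ≤ ∑ e ∈ G.edgeFinset, γ e * ρ e}

/-- The `p`-energy of a density `ρ` with edge weights `σ`: `Σ_e σ(e) ρ(e)^p`. -/
def energy [Fintype V] [DecidableEq V] (p : ℝ) (σ : Sym2 V → ℝ) (G : SimpleGraph V)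
    (ρ : Sym2 V → ℝ) : ℝ :=
  ∑ e ∈ G.edgeFinset, σ e * ρ e ^ p

/-- The `p`-modulus of a family `Γ` with edge weights `σ`:
the infimum of the `p`-energy over admissible densities. -/
def Modulus [Fintype V] [DecidableEq V] (p : ℝ) (σ : Sym2 V → ℝ) (G : SimpleGraph V)
    (Γ : Set (Sym2 V → ℝ)) : ℝ :=
  sInf (energy p σ G '' Adm G Γ)

/-- The unweighted 2-energy `Σ_e ρ(e)²`. -/
def energy2 [Fintype V] [DecidableEq V] (G : SimpleGraph V) (ρ : Sym2 V → ℝ) : ℝ :=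
  ∑ e ∈ G.edgeFinset, ρ e ^ 2

/-- The unweighted 2-modulus. -/
def Mod2 [Fintype V] [DecidableEq V] (G : SimpleGraph V) (Γ : Set (Sym2 V → ℝ)) : ℝ :=
  sInf (energy2 G '' Adm G Γ)

/-- `C` is an edge cover of `G`: a set of edges of `G` meeting every vertex. -/
def IsEdgeCover [Fintype V] [DecidableEq V] (G : SimpleGraph V) (C : Finset (Sym2 V)) : Prop :=
  ↑C ⊆ G.edgeSet ∧ ∀ v : V, ∃ e ∈ C, v ∈ e

/-- The family `Γ_ec` of indicator vectors of edge covers of `G`. -/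
def Γec [Fintype V] [DecidableEq V] (G : SimpleGraph V) : Set (Sym2 V → ℝ) :=
  {γ | ∃ C : Finset (Sym2 V), IsEdgeCover G C ∧ γ = fun e => if e ∈ C then 1 else 0}

/-- The family `Γ_fec` of fractional edge covers of `G`: nonnegative vectors on the edge
set with `Σ_{e ∈ δ(v)} γ(e) ≥ 1` at every vertex `v`. -/
def Γfec [Fintype V] [DecidableEq V] (G : SimpleGraph V) : Set (Sym2 V → ℝ) :=
  {γ | (∀ e, 0 ≤ γ e) ∧ (∀ e ∉ G.edgeSet, γ e = 0) ∧
    ∀ v : V, 1 ≤ ∑ e ∈ G.incidenceFinset v, γ e}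

/-- The family `Γ_star` of indicator vectors of the stars `δ(v)`, `v ∈ V`. -/
def Γstar [Fintype V] [DecidableEq V] (G : SimpleGraph V) : Set (Sym2 V → ℝ) :=
  {γ | ∃ v : V, γ = fun e => if e ∈ G.incidenceFinset v then 1 else 0}

/-- The subgraph of `G` whose edge set is the support `{e : γ(e) > 0}` of `γ`. -/
def suppGraph (G : SimpleGraph V) (γ : Sym2 V → ℝ) : SimpleGraph V where
  Adj u v := G.Adj u v ∧ 0 < γ s(u, v)
  symm := by
    constructor
    intro u v h
    refine ⟨h.1.symm, ?_⟩
    rw [Sym2.eq_swap]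
    exact h.2
  loopless := ⟨fun v h => G.loopless.irrefl v h.1⟩

/-- The connected component of `u` in `H` is a substar: all its edges share a common vertex. -/
def IsSubstarComponent (H : SimpleGraph V) (u : V) : Prop :=
  ∃ c : V, ∀ x y : V, H.Adj x y → H.Reachable u x → x = c ∨ y = c

/-- The connected component of `u` in `H` is a cycle of odd length. -/
def IsOddCycleComponent (H : SimpleGraph V) (u : V) : Prop :=
  ∃ (w : V) (c : H.Walk w w), c.IsCycle ∧ Odd c.length ∧ H.Reachable u w ∧
    ∀ x y : V, H.Adj x y → H.Reachable u x → s(x, y) ∈ c.edges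

/-- `γ` is a basic fractional edge cover of `G`: a fractional edge cover taking values
only in `{0, 1/2, 1}`, whose support is a vertex-disjoint union of odd cycles and
substars, with `γ(e) = 1/2` exactly on the edges lying on odd cycles of the support. -/
def IsBasicFEC [Fintype V] [DecidableEq V] (G : SimpleGraph V) (γ : Sym2 V → ℝ) : Prop :=
  γ ∈ Γfec G ∧
  (∀ e, γ e = 0 ∨ γ e = 1 / 2 ∨ γ e = 1) ∧
  (∀ u v : V, (suppGraph G γ).Adj u v →
    IsSubstarComponent (suppGraph G γ) u ∨ IsOddCycleComponent (suppGraph G γ) u) ∧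
  (∀ e ∈ G.edgeSet, (γ e = 1 / 2 ↔ ∃ (w : V) (c : (suppGraph G γ).Walk w w),
    c.IsCycle ∧ Odd c.length ∧ e ∈ c.edges))

/-- The family of basic fractional edge covers of `G`. -/
def Γbfec [Fintype V] [DecidableEq V] (G : SimpleGraph V) : Set (Sym2 V → ℝ) :=
  {γ | IsBasicFEC G γ}

/-- The vertex sum of an edge vector, written as a sum over all vertices. -/
def bdy [Fintype V] (d : Sym2 V → ℝ) (v : V) : ℝ := ∑ u, d s(v, u)

lemma sum_incidence_eq_bdy [Fintype V] [DecidableEq V] (G : SimpleGraph V) (d : Sym2 V → ℝ)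
    (hd : ∀ e ∉ G.edgeSet, d e = 0) (v : V) :
    ∑ e ∈ G.incidenceFinset v, d e = bdy d v := by
  unfold bdy
  symm
  have h1 : ∑ u, d s(v, u) = ∑ u ∈ univ.filter (fun u => G.Adj v u), d s(v, u) := by
    symm
    apply Finset.sum_subset (Finset.filter_subset _ _)
    intro u _ hu
    apply hd
    simpa using hu
  rw [h1]
  apply Finset.sum_bij (fun u _ => s(v, u))
  · intro u hu
    simp only [Finset.mem_filter, Finset.mem_univ, true_and] at hu
    simp [SimpleGraph.mem_incidenceFinset, SimpleGraph.incidenceSet, hu]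
  · intro a _ b _ h
    exact Sym2.congr_right.1 h
  · intro e he
    rw [SimpleGraph.mem_incidenceFinset] at he
    obtain ⟨h1, h2⟩ := he
    obtain ⟨u, rfl⟩ := Sym2.mem_iff_exists.1 h2
    exact ⟨u, by simpa using h1, rfl⟩
  · intros; rfl

/-- Extremality of `γ` (no nontrivial direction preserves the tight constraints). -/
def IsExt [Fintype V] (γ : Sym2 V → ℝ) : Prop :=
  ∀ d : Sym2 V → ℝ, (∀ e, γ e = 0 → d e = 0) → (∀ v, bdy γ v = 1 → bdy d v = 0) → d = 0

/-- Ratio test: move in a direction until a new constraint becomes tight. -/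
lemma ratio_test {ι : Type*} [Fintype ι] (g s : ι → ℝ) (hg : ∀ i, 0 ≤ g i)
    (hs : ∀ i, g i = 0 → s i = 0) (hneg : ∃ i, s i < 0) :
    ∃ t : ℝ, 0 ≤ t ∧ (∀ i, 0 ≤ g i + t * s i) ∧ ∃ i, g i ≠ 0 ∧ g i + t * s i = 0 := by
  obtain ⟨i0, hi0⟩ := hneg
  obtain ⟨j, hj, hmin⟩ := Finset.exists_min_image (univ.filter fun i => s i < 0)
    (fun i => g i / (- s i)) ⟨i0, by simpa using hi0⟩
  simp only [Finset.mem_filter, Finset.mem_univ, true_and] at hj hmin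
  have hj' : 0 < - s j := by linarith
  refine ⟨g j / (- s j), div_nonneg (hg j) hj'.le, ?_, j, ?_, ?_⟩
  · intro i
    by_cases hi : s i < 0
    · have := hmin i hi
      rw [le_div_iff₀ (by linarith)] at this
      linarith
    · have := mul_nonneg (div_nonneg (hg j) hj'.le) (not_lt.1 hi)
      linarith [hg i]
  · intro h
    have := hs j h
    linarith
  · have : s j ≠ 0 := by linarith
    field_simp
    ring

/-- A fractional edge cover, with `bdy`. -/
def Fec' [Fintype V] (G : SimpleGraph V) (γ : Sym2 V → ℝ) : Prop :=
  (∀ e, 0 ≤ γ e) ∧ (∀ e ∉ G.edgeSet, γ e = 0) ∧ ∀ v, 1 ≤ bdy γ v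

lemma mem_fec_iff [Fintype V] [DecidableEq V] (G : SimpleGraph V) (γ : Sym2 V → ℝ) :
    γ ∈ Γfec G ↔ Fec' G γ := by
  unfold Γfec Fec'
  simp only [Set.mem_ofPred_eq]
  constructor
  · rintro ⟨h1, h2, h3⟩
    exact ⟨h1, h2, fun v => by rw [← sum_incidence_eq_bdy G γ h2]; exact h3 v⟩
  · rintro ⟨h1, h2, h3⟩
    exact ⟨h1, h2, fun v => by rw [sum_incidence_eq_bdy G γ h2]; exact h3 v⟩

/-- The constraint slacks. -/
def slack [Fintype V] (γ : Sym2 V → ℝ) : Sym2 V ⊕ V → ℝ :=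
  Sum.elim γ (fun v => bdy γ v - 1)

/-- The number of tight constraints. -/
def tightNum [Fintype V] (γ : Sym2 V → ℝ) : ℕ :=
  (univ.filter fun i => slack γ i = 0).card

lemma bdy_add_smul [Fintype V] (γ d : Sym2 V → ℝ) (t : ℝ) (v : V) :
    bdy (fun e => γ e + t * d e) v = bdy γ v + t * bdy d v := by
  simp [bdy, Finset.sum_add_distrib, Finset.mul_sum]

lemma exists_improve [Fintype V] [DecidableEq V] (G : SimpleGraph V) (ρ : Sym2 V → ℝ)
    (hρ : ∀ e, 0 ≤ ρ e) (γ : Sym2 V → ℝ) (hγ : Fec' G γ) (hne : ¬ IsExt γ) :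
    ∃ γ', Fec' G γ' ∧ ∑ e ∈ G.edgeFinset, γ' e * ρ e ≤ ∑ e ∈ G.edgeFinset, γ e * ρ e ∧
      tightNum γ < tightNum γ' := by
  obtain ⟨h0, hE, hc⟩ := hγ
  unfold IsExt at hne
  push Not at hne
  obtain ⟨d0, hd1, hd2, hd3⟩ := hne
  -- choose the sign
  obtain ⟨d, hd1, hd2, ⟨e0, he0⟩, hcost⟩ : ∃ d : Sym2 V → ℝ, (∀ e, γ e = 0 → d e = 0) ∧
      (∀ v, bdy γ v = 1 → bdy d v = 0) ∧ (∃ e, d e < 0) ∧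
      ∑ e ∈ G.edgeFinset, d e * ρ e ≤ 0 := by
    have hneg1 : ∀ e, γ e = 0 → (fun e => - d0 e) e = 0 := fun e he => by simp [hd1 e he]
    have hneg2 : ∀ v, bdy γ v = 1 → bdy (fun e => - d0 e) v = 0 := fun v hv => by
      have := hd2 v hv
      unfold bdy at this ⊢
      simp [this]
    obtain ⟨e1, he1⟩ := Function.ne_iff.1 hd3
    simp only [Pi.zero_apply] at he1
    by_cases hA : ∃ e, d0 e < 0
    · by_cases hB : ∃ e, 0 < d0 e
      · obtain ⟨e2, he2⟩ := hB
        rcases le_total (∑ e ∈ G.edgeFinset, d0 e * ρ e) 0 with h | h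
        · exact ⟨d0, hd1, hd2, hA, h⟩
        · exact ⟨_, hneg1, hneg2, ⟨e2, by simpa using he2⟩, by simpa using h⟩
      · push Not at hB
        refine ⟨d0, hd1, hd2, hA, Finset.sum_nonpos fun e _ => ?_⟩
        exact mul_nonpos_of_nonpos_of_nonneg (hB e) (hρ e)
    · push Not at hA
      refine ⟨_, hneg1, hneg2, ⟨e1, ?_⟩, Finset.sum_nonpos fun e _ => ?_⟩
      · have := lt_of_le_of_ne (hA e1) (Ne.symm he1)
        simpa using this
      · exact mul_nonpos_of_nonpos_of_nonneg (by simpa using hA e) (hρ e)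
  obtain ⟨t, ht0, ht1, i, hi1, hi2⟩ := ratio_test (slack γ) (Sum.elim d (bdy d))
    (by rintro (e | v)
        · exact h0 e
        · simpa [slack] using hc v)
    (by rintro (e | v) h
        · exact hd1 e h
        · exact hd2 v (by simp [slack] at h; linarith))
    ⟨Sum.inl e0, he0⟩
  have hsl : ∀ i, slack (fun e => γ e + t * d e) i = slack γ i + t * Sum.elim d (bdy d) i := by
    rintro (e | v)
    · rfl
    · simp only [slack, Sum.elim_inr, bdy_add_smul]; ring
  refine ⟨fun e => γ e + t * d e, ⟨fun e => ht1 (Sum.inl e), fun e he => ?_, fun v => ?_⟩, ?_, ?_⟩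
  · simp [hE e he, hd1 e (hE e he)]
  · have := ht1 (Sum.inr v)
    rw [← hsl] at this
    simpa [slack] using this
  · have : ∑ e ∈ G.edgeFinset, (γ e + t * d e) * ρ e =
        ∑ e ∈ G.edgeFinset, γ e * ρ e + t * ∑ e ∈ G.edgeFinset, d e * ρ e := by
      rw [Finset.mul_sum, ← Finset.sum_add_distrib]
      exact Finset.sum_congr rfl fun e _ => by ring
    rw [this]
    have := mul_nonpos_of_nonneg_of_nonpos ht0 hcost
    linarith
  · apply Finset.card_lt_card
    rw [Finset.ssubset_iff_of_subset]
    · exact ⟨i, by simpa [hsl] using hi2, by simpa using hi1⟩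
    · intro j hj
      simp only [Finset.mem_filter, Finset.mem_univ, true_and] at hj ⊢
      rw [hsl, hj]
      have : Sum.elim d (bdy d) j = 0 := by
        rcases j with e | v
        · exact hd1 e hj
        · exact hd2 v (by simp [slack] at hj; linarith)
      simp [this]

lemma exists_ext [Fintype V] [DecidableEq V] (G : SimpleGraph V) (ρ : Sym2 V → ℝ)
    (hρ : ∀ e, 0 ≤ ρ e) : ∀ (n : ℕ) (γ : Sym2 V → ℝ), Fec' G γ →
      Fintype.card (Sym2 V ⊕ V) - tightNum γ = n →
    ∃ γ', Fec' G γ' ∧ ∑ e ∈ G.edgeFinset, γ' e * ρ e ≤ ∑ e ∈ G.edgeFinset, γ e * ρ e ∧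
      IsExt γ' := by
  intro n
  induction n using Nat.strong_induction_on with
  | _ n ih =>
    intro γ hγ hn
    by_cases hext : IsExt γ
    · exact ⟨γ, hγ, le_rfl, hext⟩
    · obtain ⟨γ1, h1, h2, h3⟩ := exists_improve G ρ hρ γ hγ hext
      have hle : tightNum γ1 ≤ Fintype.card (Sym2 V ⊕ V) := Finset.card_le_univ _
      obtain ⟨γ2, h4, h5, h6⟩ := ih _ (by omega) γ1 h1 rfl
      exact ⟨γ2, h4, h5.trans h2, h6⟩

/-- The alternating vector of a walk. -/
def altVec {H : SimpleGraph V} : {u v : V} → H.Walk u v → Sym2 V → ℝ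
  | _, _, .nil => fun _ => 0
  | _, _, @SimpleGraph.Walk.cons _ _ u v _ _ p => fun e => (if e = s(u, v) then 1 else 0) - altVec p e

lemma altVec_of_notMem {H : SimpleGraph V} {u v : V} (p : H.Walk u v) (e : Sym2 V)
    (he : e ∉ p.edges) : altVec p e = 0 := by
  induction p with
  | nil => rfl
  | cons h p ih =>
    simp only [SimpleGraph.Walk.edges_cons, List.mem_cons, not_or] at he
    simp [altVec, he.1, ih he.2]

lemma bdy_single [Fintype V] {u v : V} (h : u ≠ v) (z : V) :
    bdy (fun e => if e = s(u, v) then (1 : ℝ) else 0) z =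
      (if z = u then 1 else 0) + (if z = v then 1 else 0) := by
  unfold bdy
  by_cases h1 : z = u
  · subst h1
    simp [h]
  · by_cases h2 : z = v
    · subst h2
      simp [h1]
    · simp [h1, h2]

lemma bdy_altVec [Fintype V] {H : SimpleGraph V} {u v : V} (p : H.Walk u v) (z : V) :
    bdy (altVec p) z = (if z = u then 1 else 0) - (-1) ^ p.length * (if z = v then 1 else 0) := by
  induction p with
  | nil => simp [altVec, bdy]
  | @cons u v w h p ih =>
    have h1 := bdy_single h.ne z
    unfold bdy at h1 ih ⊢
    simp only [altVec, Finset.sum_sub_distrib, h1, ih, SimpleGraph.Walk.length_cons, pow_succ]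
    ring

section Structure

set_option linter.unusedSectionVars false

variable [Fintype V] [DecidableEq V] {G : SimpleGraph V} {γ : Sym2 V → ℝ}

lemma Fec'.pos_adj (hγ : Fec' G γ) {x y : V} (h : 0 < γ s(x, y)) : G.Adj x y := by
  by_contra hn
  have := hγ.2.1 s(x, y) (by simpa using hn)
  linarith

lemma Fec'.two_le (hγ : Fec' G γ) {x y z : V} (h : y ≠ z) :
    γ s(x, y) + γ s(x, z) ≤ bdy γ x := by
  unfold bdy
  rw [← Finset.sum_pair (f := fun u => γ s(x, u)) h]
  exact Finset.sum_le_sum_of_subset_of_nonneg (Finset.subset_univ _) fun u _ _ => hγ.1 _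

lemma Fec'.one_le (hγ : Fec' G γ) {x y : V} : γ s(x, y) ≤ bdy γ x := by
  unfold bdy
  exact Finset.single_le_sum (f := fun u => γ s(x, u)) (fun u _ => hγ.1 _) (Finset.mem_univ y)

/-- A fractional edge at a tight vertex is accompanied by another one. -/
lemma Fec'.exists_other (hγ : Fec' G γ) {x y : V} (ht : bdy γ x = 1)
    (h1 : γ s(x, y) < 1) : ∃ z, z ≠ y ∧ 0 < γ s(x, z) := by
  by_contra hn
  push Not at hn
  have : bdy γ x = γ s(x, y) := by
    unfold bdy
    apply Finset.sum_eq_single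
    · intro z _ hz
      exact le_antisymm (hn z hz) (hγ.1 _)
    · simp
  linarith

/-- One end of each support edge is tight. -/
lemma IsExt.tight_end (hγ : Fec' G γ) (hx : IsExt γ) {x y : V} (h : 0 < γ s(x, y)) :
    bdy γ x = 1 ∨ bdy γ y = 1 := by
  by_contra hn
  push Not at hn
  have hne := (hγ.pos_adj h).ne
  have := hx (fun e => if e = s(x, y) then 1 else 0) ?_ ?_
  · have := congrFun this s(x, y)
    simp at this
  · intro e he
    have : e ≠ s(x, y) := by rintro rfl; linarith
    simp [this]
  · intro v hv
    have hb : bdy (fun e => if e = s(x, y) then (1 : ℝ) else 0) v =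
        (if v = x then 1 else 0) + (if v = y then 1 else 0) := by
      convert bdy_single hne v
    rw [hb]
    have h1 : v ≠ x := by rintro rfl; exact hn.1 hv
    have h2 : v ≠ y := by rintro rfl; exact hn.2 hv
    simp [h1, h2]

/-- The graph of fractional edges. -/
def fracGraph (γ : Sym2 V → ℝ) (hd : ∀ v, γ s(v, v) = 0) : SimpleGraph V where
  Adj u v := 0 < γ s(u, v) ∧ γ s(u, v) < 1
  symm := by
    constructor
    intro u v h
    rw [Sym2.eq_swap]
    exact h
  loopless := ⟨fun v h => by have := hd v; linarith [h.1]⟩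

lemma Fec'.diag (hγ : Fec' G γ) (v : V) : γ s(v, v) = 0 := hγ.2.1 _ (by simp)

lemma fracGraph_card (hγ : Fec' G γ) (hx : IsExt γ) :
    (fracGraph γ hγ.diag).edgeFinset.card ≤
      (univ.filter fun v => bdy γ v = 1 ∧ 1 ≤ (fracGraph γ hγ.diag).degree v).card := by
  set F := fracGraph γ hγ.diag with hF
  set T := univ.filter fun v => bdy γ v = 1 ∧ 1 ≤ F.degree v with hT
  let ext : (F.edgeFinset → ℝ) → Sym2 V → ℝ := fun f e => if h : e ∈ F.edgeFinset then f ⟨e, h⟩ else 0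
  let L : (F.edgeFinset → ℝ) →ₗ[ℝ] (T → ℝ) :=
    { toFun := fun f v => bdy (ext f) v
      map_add' := by
        intro f g
        ext v
        simp only [bdy, ext, Pi.add_apply, ← Finset.sum_add_distrib]
        refine Finset.sum_congr rfl fun u _ => ?_
        split_ifs <;> simp
      map_smul' := by
        intro c f
        ext v
        simp only [bdy, ext, Pi.smul_apply, smul_eq_mul, Finset.mul_sum, RingHom.id_apply]
        refine Finset.sum_congr rfl fun u _ => ?_
        split_ifs <;> simp }
  have hinj : Function.Injective L := by
    rw [← LinearMap.ker_eq_bot, LinearMap.ker_eq_bot']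
    intro f hf
    have h0 : ext f = 0 := by
      apply hx
      · intro e he
        have : e ∉ F.edgeFinset := by
          induction e with
          | _ a b =>
            simp only [SimpleGraph.mem_edgeFinset, SimpleGraph.mem_edgeSet]
            intro h
            have := h.1
            linarith
        exact dif_neg this
      · intro v hv
        by_cases hd : 1 ≤ F.degree v
        · exact congrFun hf ⟨v, by simp [hT, hv, hd]⟩
        · unfold bdy
          apply Finset.sum_eq_zero
          intro u _
          have : s(v, u) ∉ F.edgeFinset := by
            simp only [SimpleGraph.mem_edgeFinset, SimpleGraph.mem_edgeSet]
            intro h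
            apply hd
            exact (F.degree_pos_iff_exists_adj v).2 ⟨u, h⟩
          exact dif_neg this
    ext ⟨e, he⟩
    have := congrFun h0 e
    exact (dif_pos he).symm.trans this
  have := LinearMap.finrank_le_finrank_of_injective hinj
  rwa [Module.finrank_fintype_fun_eq_card, Module.finrank_fintype_fun_eq_card,
    Fintype.card_coe, Fintype.card_coe] at this

lemma fracGraph_degree (hγ : Fec' G γ) (hx : IsExt γ) (v : V)
    (hv : 1 ≤ (fracGraph γ hγ.diag).degree v) :
    bdy γ v = 1 ∧ (fracGraph γ hγ.diag).degree v = 2 := by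
  have hcard := fracGraph_card hγ hx
  set F := fracGraph γ hγ.diag with hF
  have hsum := F.sum_degrees_eq_twice_card_edges
  have hle : ∀ v ∈ (univ : Finset V),
      (if bdy γ v = 1 ∧ 1 ≤ F.degree v then 2 else 0) ≤ F.degree v := by
    intro v _
    split_ifs with h
    · obtain ⟨ht, hd⟩ := h
      obtain ⟨u, hu⟩ := (F.degree_pos_iff_exists_adj v).1 hd
      obtain ⟨z, hz, hz0⟩ := hγ.exists_other ht hu.2
      have hvz : F.Adj v z := by
        refine ⟨hz0, ?_⟩
        have := hγ.two_le (x := v) hz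
        have := hu.1
        linarith
      rw [← F.card_neighborFinset_eq_degree]
      rw [← Finset.card_pair hz]
      apply Finset.card_le_card
      intro w hw
      simp only [Finset.mem_insert, Finset.mem_singleton] at hw
      rcases hw with rfl | rfl <;> simpa
    · exact Nat.zero_le _
  have hsum2 : ∑ v, (if bdy γ v = 1 ∧ 1 ≤ F.degree v then 2 else 0) =
      2 * (univ.filter fun v => bdy γ v = 1 ∧ 1 ≤ F.degree v).card := by
    rw [← Finset.sum_filter, Finset.sum_const, smul_eq_mul, mul_comm]
  have heq := (Finset.sum_eq_sum_iff_of_le hle).1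
    (le_antisymm (Finset.sum_le_sum hle) (by omega)) v (Finset.mem_univ v)
  split_ifs at heq with h
  · exact ⟨h.1, heq.symm⟩
  · omega

lemma frac_tight (hγ : Fec' G γ) (hx : IsExt γ) {x y : V}
    (h : (fracGraph γ hγ.diag).Adj x y) : bdy γ x = 1 :=
  (fracGraph_degree hγ hx x (((fracGraph γ hγ.diag).degree_pos_iff_exists_adj x).2 ⟨y, h⟩)).1

/-- A support edge next to a fractional edge is fractional. -/
lemma frac_next (hγ : Fec' G γ) (hx : IsExt γ) {x y z : V}
    (h : (fracGraph γ hγ.diag).Adj x y) (hz : 0 < γ s(x, z)) :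
    (fracGraph γ hγ.diag).Adj x z := by
  by_cases hzy : z = y
  · rwa [hzy]
  · refine ⟨hz, ?_⟩
    have h1 := frac_tight hγ hx h
    have h2 := hγ.two_le (x := x) hzy
    have := h.1
    linarith

lemma frac_isCycles (hγ : Fec' G γ) (hx : IsExt γ) : (fracGraph γ hγ.diag).IsCycles := by
  rintro v ⟨u, hu⟩
  have := (fracGraph_degree hγ hx v
    (((fracGraph γ hγ.diag).degree_pos_iff_exists_adj v).2 ⟨u, hu⟩)).2
  rw [← this, ← SimpleGraph.card_neighborSet_eq_degree, ← Nat.card_coe_set_eq,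
    Nat.card_eq_fintype_card]

lemma frac_half (hγ : Fec' G γ) (hx : IsExt γ) {x y : V}
    (h : (fracGraph γ hγ.diag).Adj x y) : γ s(x, y) = 1 / 2 := by
  have key := hx (fun e => if 0 < γ e ∧ γ e < 1 then γ e - 1 / 2 else 0) ?_ ?_
  · have := congrFun key s(x, y)
    have h' : 0 < γ s(x, y) ∧ γ s(x, y) < 1 := h
    simp only [h', and_self, if_true, Pi.zero_apply] at this
    linarith
  · intro e he
    simp [he]
  · intro v _
    by_cases hv : ∃ u, (fracGraph γ hγ.diag).Adj v u
    · obtain ⟨u, hu⟩ := hv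
      obtain ⟨ht, hdeg⟩ := fracGraph_degree hγ hx v
        (((fracGraph γ hγ.diag).degree_pos_iff_exists_adj v).2 ⟨u, hu⟩)
      unfold bdy at ht ⊢
      have h1 : ∀ w, (if 0 < γ s(v, w) ∧ γ s(v, w) < 1 then γ s(v, w) - 1 / 2 else 0) =
          γ s(v, w) - (if w ∈ (fracGraph γ hγ.diag).neighborFinset v then 1 / 2 else 0) := by
        intro w
        by_cases hw : (fracGraph γ hγ.diag).Adj v w
        · have hw' : 0 < γ s(v, w) ∧ γ s(v, w) < 1 := hw
          simp [hw, hw']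
        · have hw' : ¬ (0 < γ s(v, w) ∧ γ s(v, w) < 1) := hw
          have : γ s(v, w) = 0 := by
            by_contra hne
            exact hw (frac_next hγ hx hu (lt_of_le_of_ne (hγ.1 _) (Ne.symm hne)))
          simp [hw, this]
      simp only [h1, Finset.sum_sub_distrib, ht]
      rw [← Finset.sum_filter, Finset.sum_const]
      have : (univ.filter fun w => w ∈ (fracGraph γ hγ.diag).neighborFinset v).card = 2 := by
        rw [← hdeg, ← SimpleGraph.card_neighborFinset_eq_degree]
        congr 1
        ext w
        simp
      rw [this]
      norm_num
    · push Not at hv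
      unfold bdy
      apply Finset.sum_eq_zero
      intro u _
      have : ¬ (0 < γ s(v, u) ∧ γ s(v, u) < 1) := hv u
      simp [this]

lemma supp_adj_iff (hγ : Fec' G γ) {x y : V} : (suppGraph G γ).Adj x y ↔ 0 < γ s(x, y) :=
  ⟨fun h => h.2, fun h => ⟨hγ.pos_adj h, h⟩⟩

lemma frac_le (hγ : Fec' G γ) : fracGraph γ hγ.diag ≤ suppGraph G γ := by
  intro x y h
  exact (supp_adj_iff hγ).2 h.1

/-- Cycles in the support are odd. -/
lemma cycle_odd (hγ : Fec' G γ) (hx : IsExt γ) {w : V} (c : (suppGraph G γ).Walk w w)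
    (hc : c.IsCycle) : Odd c.length := by
  by_contra hev
  rw [Nat.not_odd_iff_even] at hev
  have key := hx (altVec c) ?_ ?_
  · cases c with
    | nil => exact hc.ne_nil rfl
    | @cons _ v _ h p =>
      have h1 := ((SimpleGraph.Walk.cons_isCycle_iff p h).1 hc).2
      have := congrFun key s(w, v)
      simp [altVec, altVec_of_notMem p _ h1] at this
  · intro e he
    apply altVec_of_notMem
    intro hmem
    have := c.edges_subset_edgeSet hmem
    induction e with
    | _ a b =>
      have := this.2
      linarith
  · intro v _
    rw [bdy_altVec, hev.neg_one_pow]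
    ring

lemma frac_reachable (hγ : Fec' G γ) (hx : IsExt γ) {u x : V}
    (p : (suppGraph G γ).Walk u x) (hu : ∃ v, (fracGraph γ hγ.diag).Adj u v) :
    (fracGraph γ hγ.diag).Reachable u x := by
  induction p with
  | nil => rfl
  | cons h p ih =>
    obtain ⟨v, hv⟩ := hu
    have h1 := frac_next hγ hx hv h.2
    exact h1.reachable.trans (ih ⟨_, h1.symm⟩)

lemma frac_component (hγ : Fec' G γ) (hx : IsExt γ) {u v : V}
    (h : (fracGraph γ hγ.diag).Adj u v) : ∃ c : (suppGraph G γ).Walk u u, c.IsCycle ∧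
      ∀ x y : V, (suppGraph G γ).Adj x y → (suppGraph G γ).Reachable u x → s(x, y) ∈ c.edges := by
  obtain ⟨p, hp, hverts⟩ :=
    (frac_isCycles hγ hx).exists_cycle_toSubgraph_verts_eq_connectedComponentSupp
      (c := (fracGraph γ hγ.diag).connectedComponentMk u) (v := u) rfl ⟨v, h⟩
  refine ⟨p.mapLe (frac_le hγ), hp.mapLe _, ?_⟩
  rintro x y hxy ⟨q⟩
  have hr := frac_reachable hγ hx q ⟨v, h⟩
  have hxmem : x ∈ p.toSubgraph.verts := by
    rw [hverts]
    exact (SimpleGraph.ConnectedComponent.eq.2 hr.symm)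
  have hxF : ∃ z, (fracGraph γ hγ.diag).Adj x z := by
    obtain ⟨q'⟩ := hr.symm
    cases q' with
    | nil => exact ⟨v, h⟩
    | cons h' _ => exact ⟨_, h'⟩
  obtain ⟨z, hz⟩ := hxF
  have hF := frac_next hγ hx hz hxy.2
  rw [SimpleGraph.Walk.edges_mapLe_eq_edges]
  rw [← SimpleGraph.Walk.adj_toSubgraph_iff_mem_edges]
  rwa [hp.adj_toSubgraph_iff_of_isCycles (frac_isCycles hγ hx) hxmem]

/-- The tight end of a nonfractional edge is a leaf, and the value is `1`. -/
lemma leaf_of_nonfrac (hγ : Fec' G γ) {x y : V} (h : 1 ≤ γ s(x, y))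
    (ht : bdy γ x = 1) : γ s(x, y) = 1 ∧ ∀ z, 0 < γ s(x, z) → z = y := by
  refine ⟨le_antisymm (by rw [← ht]; exact hγ.one_le) h, ?_⟩
  intro z hz
  by_contra hne
  have := hγ.two_le (x := x) hne
  linarith

lemma star_component (hγ : Fec' G γ) (hx : IsExt γ) {x y : V} (h : 1 ≤ γ s(x, y))
    (ht : bdy γ x = 1) : ∀ z, (suppGraph G γ).Adj y z → ∀ w, (suppGraph G γ).Adj z w → w = y := by
  intro z hz w hw
  have hxleaf := (leaf_of_nonfrac hγ h ht).2
  have hz0 : 0 < γ s(y, z) := hz.2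
  have hw0 : 0 < γ s(z, w) := hw.2
  have hz1 : 1 ≤ γ s(y, z) := by
    by_contra hlt
    have hF : (fracGraph γ hγ.diag).Adj y z := ⟨hz0, not_le.1 hlt⟩
    have h2 := frac_next hγ hx hF (z := x) (by rw [Sym2.eq_swap]; linarith)
    have := h2.2
    rw [Sym2.eq_swap] at this
    linarith
  rcases IsExt.tight_end hγ hx hz0 with hy | hzt
  · have := (leaf_of_nonfrac hγ hz1 hy).2 x (by rw [Sym2.eq_swap]; linarith)
    subst this
    exact hxleaf w hw0
  · rw [Sym2.eq_swap] at hz1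
    exact (leaf_of_nonfrac hγ hz1 hzt).2 w hw0

lemma star_reach {H : SimpleGraph V} {y : V} (hs : ∀ z, H.Adj y z → ∀ w, H.Adj z w → w = y)
    {a b : V} (p : H.Walk a b) (ha : a = y ∨ H.Adj y a) : b = y ∨ H.Adj y b := by
  induction p with
  | nil => exact ha
  | cons h p ih =>
    apply ih
    rcases ha with rfl | ha
    · exact Or.inr h
    · exact Or.inl (hs _ ha _ h)

lemma star_isSubstar {H : SimpleGraph V} {y : V} (hs : ∀ z, H.Adj y z → ∀ w, H.Adj z w → w = y)
    {a : V} (ha : a = y ∨ H.Adj y a) : IsSubstarComponent H a := by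
  refine ⟨y, ?_⟩
  rintro p q hpq ⟨r⟩
  rcases star_reach hs r ha with rfl | h
  · exact Or.inl rfl
  · exact Or.inr (hs _ h _ hpq)

/-- An edge with a leaf end lies on no cycle. -/
lemma leaf_not_cycle {H : SimpleGraph V} {x y : V} (hl : ∀ z, H.Adj x z → z = y)
    {w : V} (c : H.Walk w w) (hc : c.IsCycle) : s(x, y) ∉ c.edges := by
  intro hmem
  have hxs : x ∈ c.support := c.fst_mem_support_of_mem_edges hmem
  have h2 := hc.ncard_neighborSet_toSubgraph_eq_two hxs
  have hsub : c.toSubgraph.neighborSet x ⊆ {y} := by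
    intro z hz
    exact hl z (c.toSubgraph.adj_sub hz)
  have := Set.ncard_le_ncard hsub
  rw [Set.ncard_singleton] at this
  omega

lemma ext_basic (hγ : Fec' G γ) (hx : IsExt γ) : IsBasicFEC G γ := by
  refine ⟨(mem_fec_iff G γ).2 hγ, ?_, ?_, ?_⟩
  · intro e
    induction e with
    | _ a b =>
      rcases (hγ.1 s(a, b)).eq_or_lt with h0 | h0
      · exact Or.inl h0.symm
      · right
        rcases lt_or_ge (γ s(a, b)) 1 with h1 | h1
        · left
          exact frac_half hγ hx ⟨h0, h1⟩
        · right
          rcases IsExt.tight_end hγ hx h0 with ht | ht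
          · exact (leaf_of_nonfrac hγ h1 ht).1
          · rw [Sym2.eq_swap] at h1 ⊢
            exact (leaf_of_nonfrac hγ h1 ht).1
  · intro u v huv
    rcases lt_or_ge (γ s(u, v)) 1 with h1 | h1
    · right
      obtain ⟨c, hc, hall⟩ := frac_component hγ hx (u := u) (v := v) ⟨huv.2, h1⟩
      exact ⟨u, c, hc, cycle_odd hγ hx c hc, SimpleGraph.Reachable.refl _, hall⟩
    · left
      rcases IsExt.tight_end hγ hx huv.2 with ht | ht
      · exact star_isSubstar (star_component hγ hx h1 ht) (Or.inr huv.symm)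
      · rw [Sym2.eq_swap] at h1
        exact star_isSubstar (star_component hγ hx h1 ht) (Or.inl rfl)
  · intro e he
    induction e with
    | _ a b =>
      constructor
      · intro hhalf
        have h0 : 0 < γ s(a, b) := by rw [hhalf]; norm_num
        obtain ⟨c, hc, hall⟩ := frac_component hγ hx (u := a) (v := b)
          ⟨h0, by rw [hhalf]; norm_num⟩
        exact ⟨a, c, hc, cycle_odd hγ hx c hc,
          hall a b ((supp_adj_iff hγ).2 h0) (SimpleGraph.Reachable.refl _)⟩
      · rintro ⟨w, c, hc, _, hmem⟩
        have h0 : 0 < γ s(a, b) := (c.edges_subset_edgeSet hmem).2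
        rcases lt_or_ge (γ s(a, b)) 1 with h1 | h1
        · exact frac_half hγ hx ⟨h0, h1⟩
        · exfalso
          rcases IsExt.tight_end hγ hx h0 with ht | ht
          · exact leaf_not_cycle (H := suppGraph G γ)
              (fun z hz => (leaf_of_nonfrac hγ h1 ht).2 z hz.2) c hc hmem
          · rw [Sym2.eq_swap] at h1 hmem
            exact leaf_not_cycle (H := suppGraph G γ)
              (fun z hz => (leaf_of_nonfrac hγ h1 ht).2 z hz.2) c hc hmem

end Structure

/-- A density is admissible for the family of fractional edge covers iff it is
admissible for the family of basic fractional edge covers. -/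
theorem adm_fec_eq_adm_bfec [Fintype V] [DecidableEq V] (G : SimpleGraph V)
    (hiso : ∀ v : V, ∃ u, G.Adj v u) :
    Adm G (Γfec G) = Adm G (Γbfec G) := by
  ext ρ
  constructor
  · rintro ⟨h1, h2, h3⟩
    exact ⟨h1, h2, fun γ hγ => h3 γ hγ.1⟩
  · rintro ⟨h1, h2, h3⟩
    refine ⟨h1, h2, fun γ hγ => ?_⟩
    obtain ⟨γ', h4, h5, h6⟩ := exists_ext G ρ h1 _ γ ((mem_fec_iff G γ).1 hγ) rfl
    exact (h3 γ' (ext_basic h4 h6)).trans h5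
end
end

section
/- Let G be a finite simple graph with no isolated vertices and positive edge weights σ, let Γ_ec be the family of edge covers of G and Γ_fec the family of fractional edge covers of G. Then for every p ∈ [1,∞): (3/4)^p · Mod_{p,σ}(Γ_fec) ≤ Mod_{p,σ}(Γ_ec) ≤ Mod_{p,σ}(Γ_fec). -/
open Finset

noncomputable section
open scoped Classical

variable {V : Type*}

lemma three_col [Fintype V] [DecidableEq V] (π : Equiv.Perm V) :
    ∃ c : V → Fin 3, ∀ v, π v ≠ v → c v ≠ c (π v) := by
  have key : ∀ s : Finset V, ∃ c : V → Fin 3, ∀ v ∈ s, π v ∈ s → π v ≠ v → c v ≠ c (π v) := by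
    intro s
    induction s using Finset.induction_on with
    | empty => exact ⟨fun _ => 0, by simp⟩
    | insert a s ha ih =>
      obtain ⟨c, hc⟩ := ih
      have h3 : ∀ x y : Fin 3, ∃ z, z ≠ x ∧ z ≠ y := by decide
      obtain ⟨z, hz1, hz2⟩ := h3 (c (π a)) (c (π.symm a))
      refine ⟨fun v => if v = a then z else c v, ?_⟩
      intro v hv hpv hne
      by_cases h1 : v = a
      · subst h1
        simp only [if_true, if_neg hne]
        exact hz1
      · by_cases h2 : π v = a
        · have : v = π.symm a := by rw [← h2]; simp
          simp only [if_neg h1, if_pos h2]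
          rw [this]; exact hz2.symm
        · simp only [if_neg h1, if_neg h2]
          exact hc v (Finset.mem_of_mem_insert_of_ne hv h1)
            (Finset.mem_of_mem_insert_of_ne hpv h2) hne
  obtain ⟨c, hc⟩ := key Finset.univ
  exact ⟨c, fun v h => hc v (Finset.mem_univ _) (Finset.mem_univ _) h⟩

lemma sum_inc [Fintype V] [DecidableEq V] (G : SimpleGraph V) (f : Sym2 V → ℝ)
    (hf : ∀ e ∉ G.edgeSet, f e = 0) (v : V) :
    ∑ e ∈ G.incidenceFinset v, f e = ∑ u, f s(v, u) := by
  have hinj : Function.Injective (fun u : V => s(v, u)) := by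
    intro a b h
    exact Sym2.congr_right.1 h
  rw [← Finset.sum_image (f := f) (s := Finset.univ) (g := fun u : V => s(v, u))
    (fun a _ b _ h => hinj h)]
  apply Finset.sum_subset
  · intro e he
    rw [SimpleGraph.mem_incidenceFinset] at he
    obtain ⟨u, rfl⟩ := he.2
    simp
  · intro e he he'
    apply hf
    intro h
    apply he'
    rw [SimpleGraph.mem_incidenceFinset]
    refine ⟨h, ?_⟩
    obtain ⟨u, -, rfl⟩ := Finset.mem_image.1 he
    simp

lemma sum_edges [Fintype V] [DecidableEq V] (G : SimpleGraph V) (f : Sym2 V → ℝ)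
    (hf : ∀ e ∉ G.edgeSet, f e = 0) :
    ∑ v, ∑ u, f s(v, u) = 2 * ∑ e ∈ G.edgeFinset, f e := by
  have h1 : ∀ v, ∑ u, f s(v, u) = ∑ e ∈ G.edgeFinset, if v ∈ e then f e else 0 := by
    intro v
    rw [← sum_inc G f hf v, ← Finset.sum_filter]
    apply Finset.sum_congr _ (fun _ _ => rfl)
    ext e
    simp [SimpleGraph.mem_incidenceFinset, SimpleGraph.incidenceSet]
  simp_rw [h1]
  rw [Finset.sum_comm, Finset.mul_sum]
  apply Finset.sum_congr rfl
  intro e he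
  rw [SimpleGraph.mem_edgeFinset] at he
  induction e using Sym2.ind with
  | _ a b =>
    have hab : a ≠ b := G.ne_of_adj he
    rw [← Finset.sum_filter]
    have : (Finset.univ.filter (fun v => v ∈ s(a, b))) = {a, b} := by
      ext x; simp
    rw [this, Finset.sum_pair hab]; ring

/-- cost of a permutation in terms of edge covers -/
lemma perm_cost [Fintype V] [DecidableEq V] (G : SimpleGraph V) (ρ : Sym2 V → ℝ)
    (hρ : ρ ∈ Adm G (Γec G)) (m : V → V) (hm : ∀ v, G.Adj v (m v)) (π : Equiv.Perm V)
    (hπ : ∀ v, π v ≠ v → G.Adj v (π v)) :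
    3 / 4 ≤ ∑ v, (if π v = v then ρ s(v, m v) else ρ s(v, π v) / 2) := by
  obtain ⟨h0, hoff, hadm⟩ := hρ
  obtain ⟨c, hc⟩ := three_col π
  set f : V → V := fun v => if π v = v then m v else π v with hf
  have hadj : ∀ v, G.Adj v (f v) := by
    intro v
    by_cases h : π v = v
    · simp only [hf, if_pos h]; exact hm v
    · simp only [hf, if_neg h]; exact hπ v h
  have step : ∀ i : Fin 3, 1 ≤ ∑ v, if (π v = v ∨ c v ≠ i) then ρ s(v, f v) else 0 := by
    intro i
    set S : Finset V := Finset.univ.filter (fun v => π v = v ∨ c v ≠ i) with hS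
    set C : Finset (Sym2 V) := S.image (fun v => s(v, f v)) with hC
    have hCsub : ∀ e ∈ C, e ∈ G.edgeSet := by
      intro e he
      obtain ⟨v, -, rfl⟩ := Finset.mem_image.1 he
      exact hadj v
    have hcov : IsEdgeCover G C := by
      refine ⟨fun e he => hCsub e he, ?_⟩
      intro v
      by_cases hv : π v = v ∨ c v ≠ i
      · exact ⟨s(v, f v), Finset.mem_image.2 ⟨v, by simp [hS, hv], rfl⟩, by simp⟩
      · push Not at hv
        have hne : π (π.symm v) ≠ π.symm v := by
          intro h
          apply hv.1
          have h' : v = π.symm v := by simpa using h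
          have := congrArg π h'
          simpa using this
        have h2 := hc _ hne
        refine ⟨s(π.symm v, f (π.symm v)), Finset.mem_image.2 ⟨π.symm v, ?_, rfl⟩, ?_⟩
        · simp only [hS, Finset.mem_filter, Finset.mem_univ, true_and]
          right
          rw [Equiv.apply_symm_apply, hv.2] at h2
          exact h2
        · simp only [hf, if_neg hne]; simp
    have h1 := hadm _ ⟨C, hcov, rfl⟩
    have h2 : ∑ e ∈ G.edgeFinset, (if e ∈ C then (1:ℝ) else 0) * ρ e = ∑ e ∈ C, ρ e := by
      simp only [ite_mul, one_mul, zero_mul]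
      rw [← Finset.sum_filter]
      apply Finset.sum_congr _ (fun _ _ => rfl)
      ext e
      simp only [Finset.mem_filter, SimpleGraph.mem_edgeFinset]
      exact ⟨fun h => h.2, fun h => ⟨hCsub e h, h⟩⟩
    have h3 : ∑ e ∈ C, ρ e ≤ ∑ v ∈ S, ρ s(v, f v) :=
      Finset.sum_image_le_of_nonneg (fun _ _ => h0 _)
    rw [← Finset.sum_filter]
    exact (h1.trans h2.le).trans h3
  have s0 := step 0
  have s1 := step 1
  have s2 := step 2
  have : (∑ v, if (π v = v ∨ c v ≠ 0) then ρ s(v, f v) else 0)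
      + (∑ v, if (π v = v ∨ c v ≠ 1) then ρ s(v, f v) else 0)
      + (∑ v, if (π v = v ∨ c v ≠ 2) then ρ s(v, f v) else 0)
      ≤ 4 * ∑ v, (if π v = v then ρ s(v, m v) else ρ s(v, π v) / 2) := by
    rw [← Finset.sum_add_distrib, ← Finset.sum_add_distrib, Finset.mul_sum]
    apply Finset.sum_le_sum
    intro v _
    by_cases h : π v = v
    · simp only [hf, h, true_or, if_true]
      linarith [h0 s(v, m v)]
    · simp only [hf, h, false_or, if_false]
      have : ∀ x : Fin 3, x = 0 ∨ x = 1 ∨ x = 2 := by decide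
      rcases this (c v) with h' | h' | h' <;> rw [h'] <;> simp <;> linarith
  linarith

lemma key_bound [Fintype V] [DecidableEq V] (G : SimpleGraph V)
    (hiso : ∀ v : V, ∃ u, G.Adj v u) (ρ : Sym2 V → ℝ)
    (hρ : ρ ∈ Adm G (Γec G)) (γ : Sym2 V → ℝ) (hγ : γ ∈ Γfec G) :
    3 / 4 ≤ ∑ e ∈ G.edgeFinset, γ e * ρ e := by
  have hρ' := hρ
  obtain ⟨h0, hoff, hadm⟩ := hρ
  obtain ⟨g0, goff, gcov⟩ := hγ
  have hmin : ∀ v, ∃ u, G.Adj v u ∧ ∀ u', G.Adj v u' → ρ s(v, u) ≤ ρ s(v, u') := by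
    intro v
    obtain ⟨u, hu, hu'⟩ := Set.exists_min_image {u | G.Adj v u} (fun u => ρ s(v, u))
      (Set.toFinite _) (hiso v)
    exact ⟨u, hu, hu'⟩
  choose m hm hmle using hmin
  set g : V → V → ℝ := fun v u => γ s(v, u) with hg
  have gsym : ∀ v u, g v u = g u v := by intro v u; simp only [hg, Sym2.eq_swap]
  have gnn : ∀ v u, 0 ≤ g v u := fun v u => g0 _
  have gadj : ∀ v u, ¬ G.Adj v u → g v u = 0 := fun v u h => goff _ h
  set d : V → ℝ := fun v => ∑ u, g v u with hd
  have d1 : ∀ v, 1 ≤ d v := by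
    intro v
    have := gcov v
    rwa [sum_inc G γ goff v] at this
  set B : V → V → ℝ := fun v u => g v u / max (d v) (d u) with hB
  have Bsym : ∀ v u, B v u = B u v := by
    intro v u; simp only [hB]; rw [gsym, max_comm]
  have mpos : ∀ v u, 0 < max (d v) (d u) := fun v u =>
    lt_of_lt_of_le (by linarith [d1 v]) (le_max_left _ _)
  have Bnn : ∀ v u, 0 ≤ B v u := fun v u => div_nonneg (gnn _ _) (mpos v u).le
  have Ble : ∀ v u, B v u ≤ g v u / d v := by
    intro v u
    exact div_le_div_of_nonneg_left (gnn _ _) (by linarith [d1 v]) (le_max_left _ _)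
  have gd : ∀ v, ∑ u, g v u / d v = 1 := by
    intro v
    rw [← Finset.sum_div]
    exact div_self (by have := d1 v; positivity)
  have Bz : ∀ v, B v v = 0 := by
    intro v
    simp only [hB, gadj v v (G.irrefl), zero_div]
  set A : Matrix V V ℝ := fun v u => B v u + if v = u then 1 - ∑ x, B v x else 0 with hA
  have Bsum : ∀ v, ∑ x, B v x ≤ 1 := by
    intro v; rw [← gd v]; exact Finset.sum_le_sum (fun u _ => Ble v u)
  have Asym : ∀ v u, A v u = A u v := by
    intro v u
    simp only [hA]
    by_cases h : v = u
    · subst h; rfl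
    · rw [if_neg h, if_neg (Ne.symm h), Bsym]
  have Arow : ∀ v, ∑ u, A v u = 1 := by
    intro v
    simp only [hA, Finset.sum_add_distrib, Finset.sum_ite_eq, Finset.mem_univ, if_true]
    ring
  have AD : A ∈ doublyStochastic ℝ V := by
    rw [mem_doublyStochastic_iff_sum]
    refine ⟨?_, Arow, ?_⟩
    · intro v u
      simp only [hA]
      have := Bsum v
      have := Bnn v u
      split_ifs <;> linarith
    · intro u
      rw [← Arow u]
      exact Finset.sum_congr rfl (fun v _ => Asym v u)
  obtain ⟨w, w0, w1, wA⟩ := exists_eq_sum_perm_of_mem_doublyStochastic AD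
  set K : V → V → ℝ := fun v u => if u = v then ρ s(v, m v) else ρ s(v, u) / 2 with hK
  have wA' : ∀ v u, A v u = ∑ π : Equiv.Perm V, w π * (if π v = u then 1 else 0) := by
    intro v u
    rw [← wA, Matrix.sum_apply]
    apply Finset.sum_congr rfl
    intro π _
    simp [Equiv.Perm.permMatrix, PEquiv.toMatrix_apply, Equiv.toPEquiv_apply, eq_comm]
  have hcost : 3 / 4 ≤ ∑ v, ∑ u, A v u * K v u := by
    have e1 : ∑ v, ∑ u, A v u * K v u = ∑ π : Equiv.Perm V, w π * ∑ v, K v (π v) := by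
      simp_rw [wA', Finset.sum_mul, Finset.mul_sum]
      rw [Finset.sum_comm' (t' := Finset.univ) (s' := fun _ => Finset.univ) (by simp)]
      rw [Finset.sum_comm]
      rw [Finset.sum_congr rfl (fun v _ => Finset.sum_comm)]
      rw [Finset.sum_comm]
      apply Finset.sum_congr rfl
      intro π _
      apply Finset.sum_congr rfl
      intro v _
      simp
    rw [e1]
    have e2 : (3 / 4 : ℝ) = ∑ π : Equiv.Perm V, w π * (3 / 4) := by
      rw [← Finset.sum_mul, w1, one_mul]
    rw [e2]
    apply Finset.sum_le_sum
    intro π _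
    rcases (w0 π).eq_or_lt with h | h
    · rw [← h]; simp
    · apply mul_le_mul_of_nonneg_left _ (w0 π)
      refine perm_cost G ρ hρ' m hm π ?_
      intro v hv
      by_contra hn
      have hA0 : A v (π v) = 0 := by
        simp only [hA, hB, gadj _ _ hn, if_neg (Ne.symm hv)]; simp
      have hle : w π ≤ A v (π v) := by
        rw [wA' v (π v)]
        refine le_trans (by simp) (Finset.single_le_sum
          (f := fun τ : Equiv.Perm V => w τ * (if τ v = π v then (1:ℝ) else 0))
          (fun τ _ => mul_nonneg (w0 τ) (by split_ifs <;> norm_num)) (Finset.mem_univ π))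
      linarith
  set F : V → V → ℝ := fun v u => B v u * (ρ s(v, u) / 2) + (g v u / d v - B v u) * ρ s(v, m v)
    with hF
  have hcF : ∑ v, ∑ u, A v u * K v u = ∑ v, ∑ u, F v u := by
    apply Finset.sum_congr rfl
    intro v _
    have l1 : ∑ u, A v u * K v u
        = ∑ u, B v u * (ρ s(v, u) / 2) + (1 - ∑ x, B v x) * ρ s(v, m v) := by
      have : ∀ u, A v u * K v u = B v u * (ρ s(v, u) / 2) +
          if v = u then (1 - ∑ x, B v x) * ρ s(v, m v) else 0 := by
        intro u
        by_cases h : v = u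
        · subst h; simp [hA, hK, Bz]
        · simp [hA, hK, h, Ne.symm h]
      simp_rw [this, Finset.sum_add_distrib]
      simp
    rw [l1]
    simp only [hF, Finset.sum_add_distrib]
    rw [← Finset.sum_mul, Finset.sum_sub_distrib, gd]
  have hpair : ∀ v u, d v ≤ d u → F v u + F u v ≤ g v u * ρ s(v, u) := by
    intro v u hdu
    have hBu : g u v / d u - B u v = 0 := by
      simp only [hB]; rw [max_eq_left hdu]; ring
    have hs : s(u, v) = s(v, u) := Sym2.eq_swap
    simp only [hF]
    rw [hBu, Bsym u v, hs]
    by_cases had : G.Adj v u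
    · have a1 : (g v u / d v - B v u) * ρ s(v, m v) ≤ (g v u / d v - B v u) * ρ s(v, u) :=
        mul_le_mul_of_nonneg_left (hmle v u had) (by linarith [Ble v u])
      have a2 : g v u / d v * ρ s(v, u) ≤ g v u * ρ s(v, u) :=
        mul_le_mul_of_nonneg_right (div_le_self (gnn v u) (d1 v)) (h0 _)
      nlinarith
    · have := gadj v u had
      simp [hB, this]
  have hpair' : ∀ v u, F v u + F u v ≤ g v u * ρ s(v, u) := by
    intro v u
    rcases le_total (d v) (d u) with h | h
    · exact hpair v u h
    · have := hpair u v h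
      rw [gsym u v, (Sym2.eq_swap : s(u, v) = s(v, u))] at this
      linarith
  have h2 : ∑ v, ∑ u, (F v u + F u v) ≤ ∑ v, ∑ u, g v u * ρ s(v, u) :=
    Finset.sum_le_sum (fun v _ => Finset.sum_le_sum (fun u _ => hpair' v u))
  have h3 : ∑ v, ∑ u, (F v u + F u v) = 2 * ∑ v, ∑ u, F v u := by
    simp_rw [Finset.sum_add_distrib]
    rw [Finset.sum_comm (f := fun v u => F u v)]
    ring
  have h4 := sum_edges G (fun e => γ e * ρ e) (fun e he => by simp [goff e he])
  have h5 : ∑ v, ∑ u, g v u * ρ s(v, u) = 2 * ∑ e ∈ G.edgeFinset, γ e * ρ e := h4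
  linarith

lemma ec_sub_fec [Fintype V] [DecidableEq V] (G : SimpleGraph V) : Γec G ⊆ Γfec G := by
  rintro γ ⟨C, ⟨hC, hcov⟩, rfl⟩
  refine ⟨fun e => by dsimp only; split_ifs <;> norm_num, ?_, ?_⟩
  · intro e he
    exact if_neg (fun h => he (hC h))
  · intro v
    obtain ⟨e, he, hv⟩ := hcov v
    have hmem : e ∈ G.incidenceFinset v := by
      rw [SimpleGraph.mem_incidenceFinset]; exact ⟨hC he, hv⟩
    refine le_trans (by simp [he]) (Finset.single_le_sum
      (f := fun e => if e ∈ C then (1:ℝ) else 0) (fun e _ => ?_) hmem)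
    split_ifs <;> norm_num

lemma energy_nonneg [Fintype V] [DecidableEq V] (G : SimpleGraph V)
    (σ : Sym2 V → ℝ) (hσ : ∀ e, 0 < σ e) (p : ℝ) (ρ : Sym2 V → ℝ) (h : ∀ e, 0 ≤ ρ e) :
    0 ≤ energy p σ G ρ :=
  Finset.sum_nonneg (fun e _ => mul_nonneg (hσ e).le (Real.rpow_nonneg (h e) p))

lemma bdd_energy [Fintype V] [DecidableEq V] (G : SimpleGraph V)
    (σ : Sym2 V → ℝ) (hσ : ∀ e, 0 < σ e) (p : ℝ) (Γ : Set (Sym2 V → ℝ)) :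
    BddBelow (energy p σ G '' Adm G Γ) := by
  refine ⟨0, ?_⟩
  rintro _ ⟨ρ, hρ, rfl⟩
  exact energy_nonneg G σ hσ p ρ hρ.1

lemma adm_fec_nonempty [Fintype V] [DecidableEq V] [Nonempty V] (G : SimpleGraph V) :
    (Adm G (Γfec G)).Nonempty := by
  refine ⟨fun e => if e ∈ G.edgeSet then 1 else 0, ?_, ?_, ?_⟩
  · intro e; dsimp only; split_ifs <;> norm_num
  · intro e he; exact if_neg he
  · rintro γ ⟨g0, goff, gcov⟩
    obtain ⟨v⟩ := ‹Nonempty V›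
    refine (gcov v).trans ?_
    have : ∑ e ∈ G.edgeFinset, γ e * (if e ∈ G.edgeSet then (1:ℝ) else 0)
        = ∑ e ∈ G.edgeFinset, γ e := by
      apply Finset.sum_congr rfl
      intro e he
      rw [SimpleGraph.mem_edgeFinset] at he
      simp [he]
    rw [this]
    apply Finset.sum_le_sum_of_subset_of_nonneg
    · intro e he
      rw [SimpleGraph.mem_incidenceFinset] at he
      rw [SimpleGraph.mem_edgeFinset]
      exact he.1
    · intro e _ _; exact g0 e

/-- `(3/4)^p Mod_{p,σ}(Γ_fec) ≤ Mod_{p,σ}(Γ_ec) ≤ Mod_{p,σ}(Γ_fec)` for `p ∈ [1,∞)`. -/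
theorem mod_ec_fec_bounds [Fintype V] [DecidableEq V] (G : SimpleGraph V)
    (hiso : ∀ v : V, ∃ u, G.Adj v u) (σ : Sym2 V → ℝ) (hσ : ∀ e, 0 < σ e)
    (p : ℝ) (hp : 1 ≤ p) :
    (3 / 4 : ℝ) ^ p * Modulus p σ G (Γfec G) ≤ Modulus p σ G (Γec G) ∧
    Modulus p σ G (Γec G) ≤ Modulus p σ G (Γfec G) := by
  rcases isEmpty_or_nonempty V with hV | hV
  · have hE : ∀ Γ : Set (Sym2 V → ℝ), Γ.Nonempty → Modulus p σ G Γ = 0 := by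
      rintro Γ ⟨γ, hγ⟩
      have : Adm G Γ = ∅ := by
        ext ρ
        simp only [Set.mem_empty_iff_false, iff_false]
        rintro ⟨-, -, h⟩
        have := h γ hγ
        rw [Finset.sum_eq_zero] at this
        · norm_num at this
        · intro e _
          induction e using Sym2.ind with
          | _ a b => exact (hV.false a).elim
      simp [Modulus, this]
    have hec : (Γec G).Nonempty :=
      ⟨_, ∅, ⟨by simp, fun v => (hV.false v).elim⟩, rfl⟩
    rw [hE _ hec, hE _ (hec.mono (ec_sub_fec G))]
    simp
  · have hsub : Adm G (Γfec G) ⊆ Adm G (Γec G) := fun ρ h =>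
      ⟨h.1, h.2.1, fun γ hγ => h.2.2 γ (ec_sub_fec G hγ)⟩
    have hne := adm_fec_nonempty G
    constructor
    · apply le_csInf ((hne.mono hsub).image _)
      rintro _ ⟨ρ, hρ, rfl⟩
      have hmem : (fun e => 4 / 3 * ρ e) ∈ Adm G (Γfec G) := by
        refine ⟨fun e => mul_nonneg (by norm_num) (hρ.1 e), fun e he => ?_, fun γ hγ => ?_⟩
        · simp [hρ.2.1 e he]
        · have h := key_bound G hiso ρ hρ γ hγ
          have e1 : ∑ e ∈ G.edgeFinset, γ e * (4 / 3 * ρ e)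
              = 4 / 3 * ∑ e ∈ G.edgeFinset, γ e * ρ e := by
            rw [Finset.mul_sum]
            exact Finset.sum_congr rfl (fun e _ => by ring)
          rw [e1]; linarith
      have h1 : Modulus p σ G (Γfec G) ≤ energy p σ G (fun e => 4 / 3 * ρ e) :=
        csInf_le (bdd_energy G σ hσ p _) ⟨_, hmem, rfl⟩
      have h2 : (3 / 4 : ℝ) ^ p * energy p σ G (fun e => 4 / 3 * ρ e) = energy p σ G ρ := by
        simp only [energy]
        rw [Finset.mul_sum]
        apply Finset.sum_congr rfl
        intro e _
        have h34 : (3 / 4 : ℝ) ^ p * (4 / 3 : ℝ) ^ p = 1 := by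
          rw [← Real.mul_rpow (by norm_num) (by norm_num)]; norm_num
        rw [Real.mul_rpow (by norm_num) (hρ.1 e)]
        linear_combination (σ e * ρ e ^ p) * h34
      rw [← h2]
      exact mul_le_mul_of_nonneg_left h1 (by positivity)
    · exact csInf_le_csInf (bdd_energy G σ hσ p _) (hne.image _) (Set.image_mono hsub)
end
end
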